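/- (Convergence proposition for MAMRL gradient steps.) Let n ≥ 1, fix an index i ∈ {1, …, n}, and let a = (a_1, …, a_n) be distributed uniformly on {0,1}^n. Define ĝ = (∏_{j=1}^n a_j)·(2a_i − 1). Then the probability that ĝ > 0 equals (1/2)^n. Since the true gradient of the expected reward with respect to θ_i at θ = (1/2, …, 1/2) is the strictly positive number (1/2)^{n−1}, the probability that the estimated gradient and the true gradient have strictly positive product (i.e., the gradient step moves in the correct direction) equals (1/2)^n, which decreases exponentially in the number n of agents. -/

import Mathlib

open MeasureTheory

/-- Convergence proposition for MAMRL gradient steps: for `a`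
uniform on `{0,1}^n` and the estimator `ĝ(a) = (∏ j, a j)·(2·a i − 1)`, the
probability that `ĝ > 0` equals `(1/2)^n`; the true gradient of the expected
reward `L(θ) = ∏ j, θ j` with respect to coordinate `i` at `θ = (1/2,…,1/2)` is
the strictly positive number `(1/2)^{n−1}`; and the probability that the
estimated gradient and the true gradient have strictly positive product equals
`(1/2)^n`. -/
theorem stmt_8 (n : ℕ) (hn : 1 ≤ n) (i : Fin n)
    (g : (Fin n → Fin 2) → ℝ)
    (hg : ∀ a, g a = (∏ j, ((a j : ℕ) : ℝ)) * (2 * ((a i : ℕ) : ℝ) - 1))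
    (L : (Fin n → ℝ) → ℝ) (hL : ∀ θ, L θ = ∏ j, θ j) :
    ((PMF.uniformOfFintype (Fin n → Fin 2)).toMeasure {a | 0 < g a} =
        ((1 : ENNReal) / 2) ^ n) ∧
      HasDerivAt (fun t : ℝ => L (Function.update (fun _ => (1 / 2 : ℝ)) i t))
        (((1 : ℝ) / 2) ^ (n - 1)) (1 / 2) ∧
      (0 : ℝ) < ((1 : ℝ) / 2) ^ (n - 1) ∧
      (PMF.uniformOfFintype (Fin n → Fin 2)).toMeasure
          {a | 0 < g a * ((1 : ℝ) / 2) ^ (n - 1)} =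
        ((1 : ENNReal) / 2) ^ n := by
  have hpos : (0 : ℝ) < ((1 : ℝ) / 2) ^ (n - 1) := by positivity
  have hset : {a | 0 < g a} = {(fun _ => 1 : Fin n → Fin 2)} := by
    ext a
    simp only [Set.mem_setOf_eq, Set.mem_singleton_iff]
    constructor
    · intro h
      funext j
      by_contra hj
      have h0 : a j = 0 := by
        generalize a j = x at hj
        fin_cases x <;> simp_all
      have hp : (∏ j, ((a j : ℕ) : ℝ)) = 0 :=
        Finset.prod_eq_zero (Finset.mem_univ j) (by simp [h0])
      rw [hg, hp, zero_mul] at h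
      exact lt_irrefl _ h
    · rintro rfl
      rw [hg]
      norm_num
  have hset2 : {a | 0 < g a * ((1 : ℝ) / 2) ^ (n - 1)} = {a | 0 < g a} := by
    ext a
    exact mul_pos_iff_of_pos_right hpos
  have hm : (PMF.uniformOfFintype (Fin n → Fin 2)).toMeasure {a | 0 < g a} =
      ((1 : ENNReal) / 2) ^ n := by
    rw [hset, PMF.toMeasure_apply_singleton _ _ (MeasurableSet.singleton _),
      PMF.uniformOfFintype_apply]
    simp [ENNReal.inv_pow]
  refine ⟨hm, ?_, hpos, by rw [hset2]; exact hm⟩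
  have hf : (fun t : ℝ => L (Function.update (fun _ => (1 / 2 : ℝ)) i t)) =
      fun t => t * ((1 : ℝ) / 2) ^ (n - 1) := by
    funext t
    rw [hL, Finset.prod_update_of_mem (Finset.mem_univ i), Finset.prod_const,
      Finset.card_sdiff_of_subset (Finset.subset_univ _)]
    simp
  rw [hf]
  simpa using (hasDerivAt_id (1 / 2 : ℝ)).mul_const (((1 : ℝ) / 2) ^ (n - 1))
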